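/- Let w^λ be a maximizer of ℰ over K_λ(D) with λ > 1/|D| and λ ≠ 2Ω. Write w^λ = λ 1_{A^λ} + 2Ω 1_{B^λ} where A^λ = {Gw^λ + (Ω/2)|x|² > μ^λ} and B^λ = {Gw^λ + (Ω/2)|x|² = μ^λ}. Then |B^λ| = 0; consequently w^λ = λ 1_{A^λ} a.e., i.e., every maximizer is a vortex patch. -/

import Mathlib

open MeasureTheory Real Set Filter Topology ENNReal
noncomputable section
abbrev E2 := EuclideanSpace ℝ (Fin 2)
def diskD : Set E2 := Metric.ball 0 1
def greenh (x y : E2) : ℝ := -(1/(2*π)) * Real.log ‖y‖ - (1/(2*π)) * Real.log ‖x - (‖y‖^2)⁻¹ • y‖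
def greenG (x y : E2) : ℝ := -(1/(2*π)) * Real.log ‖x - y‖ - greenh x y
def muD : Measure E2 := volume.restrict diskD
def Kset (lam : ℝ) : Set (E2 → ℝ) :=
  {w | AEMeasurable w muD ∧ (∀ᵐ x ∂muD, 0 ≤ w x ∧ w x ≤ lam) ∧ ∫ x, w x ∂muD = 1}
def Efun (w : E2 → ℝ) : ℝ := (1/2) * ∫ x in diskD, ∫ y in diskD, greenG x y * w x * w y
def calE (Ω : ℝ) (w : E2 → ℝ) : ℝ := Efun w + (Ω/2) * ∫ x in diskD, ‖x‖^2 * w x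
/-- The stream-type function Gw + (Ω/2)|x|². -/
def psiFun (Ω : ℝ) (w : E2 → ℝ) (x : E2) : ℝ :=
  (∫ y in diskD, greenG x y * w y) + (Ω/2) * ‖x‖^2

instance : IsFiniteMeasure muD := by
  unfold muD diskD
  exact ⟨by rw [Measure.restrict_apply_univ]; exact measure_ball_lt_top⟩

def gg (x y : E2) : ℝ := (1/(4*π)) * Real.log (1 + (1-‖x‖^2)*(1-‖y‖^2)/‖x-y‖^2)

lemma mem_disk {x : E2} : x ∈ diskD ↔ ‖x‖ < 1 := by simp [diskD]

lemma disk_meas : MeasurableSet diskD := Metric.isOpen_ball.measurableSet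

lemma gg_symm (x y : E2) : gg x y = gg y x := by
  unfold gg; rw [norm_sub_rev x y, mul_comm (1-‖x‖^2)]

lemma gg_meas : Measurable (fun p : E2 × E2 => gg p.1 p.2) := by
  unfold gg; fun_prop

lemma one_sub_pos {x : E2} (hx : x ∈ diskD) : 0 < 1 - ‖x‖^2 ∧ 1 - ‖x‖^2 ≤ 1 := by
  have := mem_disk.1 hx
  have h0 := norm_nonneg x
  constructor <;> nlinarith

lemma gg_nonneg {x y : E2} (hx : x ∈ diskD) (hy : y ∈ diskD) : 0 ≤ gg x y := by
  unfold gg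
  have h1 := (one_sub_pos hx).1
  have h2 := (one_sub_pos hy).1
  refine mul_nonneg (by positivity) (Real.log_nonneg ?_)
  have : 0 ≤ (1-‖x‖^2)*(1-‖y‖^2)/‖x-y‖^2 := by positivity
  linarith

lemma gg_le {x y : E2} (hx : x ∈ diskD) (hy : y ∈ diskD) : gg x y ≤ (1/(2*π)) * ‖x-y‖⁻¹ := by
  unfold gg
  have h1 := one_sub_pos hx
  have h2 := one_sub_pos hy
  set s := ‖x-y‖⁻¹ with hs
  have hs0 : 0 ≤ s := by positivity
  have hq : (1-‖x‖^2)*(1-‖y‖^2)/‖x-y‖^2 ≤ s^2 := by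
    rw [div_eq_mul_inv, hs, inv_pow]
    have : (1-‖x‖^2)*(1-‖y‖^2) ≤ 1 := by nlinarith [h1.1, h1.2, h2.1, h2.2]
    have h3 : 0 ≤ (‖x-y‖^2)⁻¹ := by positivity
    nlinarith
  have hq0 : 0 ≤ (1-‖x‖^2)*(1-‖y‖^2)/‖x-y‖^2 := by
    have := h1.1; have := h2.1; positivity
  have hl : Real.log (1 + (1-‖x‖^2)*(1-‖y‖^2)/‖x-y‖^2) ≤ 2 * s := by
    calc _ ≤ Real.log ((1+s)^2) := Real.log_le_log (by linarith) (by nlinarith)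
      _ = 2 * Real.log (1+s) := by rw [Real.log_pow]; norm_num
      _ ≤ 2 * s := by
        have := Real.log_le_sub_one_of_pos (show 0 < 1 + s by linarith)
        linarith
  calc _ ≤ (1/(4*π)) * (2*s) := by gcongr
    _ = _ := by field_simp; norm_num

lemma green_eq {x y : E2} (hx : x ∈ diskD) (hy : y ∈ diskD) (hy0 : y ≠ 0) (hxy : x ≠ y) :
    greenG x y = gg x y := by
  have h1 := one_sub_pos hx
  have h2 := one_sub_pos hy
  have hyn : 0 < ‖y‖ := norm_pos_iff.2 hy0
  have hd : 0 < ‖x - y‖ := norm_pos_iff.2 (sub_ne_zero.2 hxy)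
  have e1 : ‖x - (‖y‖^2)⁻¹ • y‖^2 * ‖y‖^2 = ‖x-y‖^2 + (1-‖x‖^2)*(1-‖y‖^2) := by
    rw [norm_sub_sq_real, norm_sub_sq_real, inner_smul_right, norm_smul]
    simp only [norm_inv, norm_pow, norm_norm]
    field_simp
    ring
  have hp : 0 < ‖x-y‖^2 + (1-‖x‖^2)*(1-‖y‖^2) := by
    have := h1.1; have := h2.1; positivity
  have hz : 0 < ‖x - (‖y‖^2)⁻¹ • y‖ := by
    rcases (norm_nonneg (x - (‖y‖^2)⁻¹ • y)).eq_or_lt with h | h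
    · rw [← h] at e1; simp at e1; linarith
    · exact h
  have e2 : 1 + (1-‖x‖^2)*(1-‖y‖^2)/‖x-y‖^2 = (‖x - (‖y‖^2)⁻¹ • y‖^2 * ‖y‖^2)/‖x-y‖^2 := by
    rw [e1]; field_simp
  unfold greenG greenh gg
  rw [e2, Real.log_div (by positivity) (by positivity), Real.log_mul (by positivity) (by positivity),
    Real.log_pow, Real.log_pow, Real.log_pow]
  push_cast
  field_simp
  ring

lemma ae_prod_disk : ∀ᵐ p ∂(muD.prod muD), p.1 ∈ diskD ∧ p.2 ∈ diskD := by
  have : muD.prod muD = (volume.prod volume).restrict (diskD ×ˢ diskD) := by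
    unfold muD; rw [Measure.prod_restrict]
  rw [this]
  filter_upwards [ae_restrict_mem (disk_meas.prod disk_meas)] with p hp
  exact hp

lemma ae_green : ∀ᵐ p ∂(muD.prod muD), greenG p.1 p.2 = gg p.1 p.2 := by
  have hm : MeasurableSet {p : E2 × E2 | p.2 ≠ 0 ∧ p.1 ≠ p.2} := by
    apply MeasurableSet.inter
    · exact (measurable_snd (measurableSet_singleton (0:E2))).compl
    · exact (measurableSet_eq_fun measurable_fst measurable_snd).compl
  have : ∀ᵐ p ∂(muD.prod muD), p.2 ≠ 0 ∧ p.1 ≠ p.2 := by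
    rw [Measure.ae_prod_iff_ae_ae hm]
    refine Eventually.of_forall fun x => ?_
    have h0 : ∀ z : E2, ∀ᵐ y ∂muD, y ≠ z := fun z =>
      ae_restrict_of_ae (by simp [ae_iff, measure_singleton])
    filter_upwards [h0 0, h0 x] with y a b
    exact ⟨a, b.symm⟩
  filter_upwards [this, ae_prod_disk] with p hp hd
  exact green_eq hd.1 hd.2 hp.1 hp.2

lemma integ_inv : Integrable (fun z : E2 => (Metric.ball (0:E2) 2).indicator (fun z => ‖z‖⁻¹) z) := by
  have : (fun z : E2 => (Metric.ball (0:E2) 2).indicator (fun z => ‖z‖⁻¹) z) =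
      fun z : E2 => (fun t : ℝ => (Iio (2:ℝ)).indicator (fun t => t⁻¹) t) ‖z‖ := by
    ext z; simp [Set.indicator]
  rw [this, integrable_fun_norm_addHaar]
  have h2 : IntegrableOn (fun t : ℝ => (Iio (2:ℝ)).indicator (fun _ => (1:ℝ)) t) (Ioi 0) := by
    rw [integrableOn_indicator_iff measurableSet_Iio]
    refine integrableOn_const ?_
    rw [Iio_inter_Ioi]; simp
  refine h2.congr_fun (fun t ht => ?_) measurableSet_Ioi
  have : t ≠ 0 := (mem_Ioi.1 ht).ne'
  by_cases h : t < 2 <;> simp [Set.indicator, h, this]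

lemma integ_gg : Integrable (fun p : E2 × E2 => gg p.1 p.2) (muD.prod muD) := by
  have h1 : Integrable (diskD.indicator (fun _ => (1:ℝ))) (volume : Measure E2) := by
    rw [integrable_indicator_iff disk_meas]
    have : IsFiniteMeasure (volume.restrict diskD) := inferInstanceAs (IsFiniteMeasure muD)
    exact integrable_const _
  have h := (h1.convolution_integrand (ContinuousLinearMap.mul ℝ ℝ) integ_inv)
  have e : muD.prod muD = (volume.prod volume).restrict (diskD ×ˢ diskD) := by
    unfold muD; rw [Measure.prod_restrict]
  have h' := h.restrict (s := diskD ×ˢ diskD)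
  rw [← e] at h'
  refine (h'.const_mul (1/(2*π))).mono' gg_meas.aestronglyMeasurable ?_
  filter_upwards [ae_prod_disk] with p hp
  rw [Real.norm_of_nonneg (gg_nonneg hp.1 hp.2)]
  have hb : p.1 - p.2 ∈ Metric.ball (0:E2) 2 := by
    have := norm_sub_le p.1 p.2
    have := mem_disk.1 hp.1
    have := mem_disk.1 hp.2
    simp only [Metric.mem_ball, dist_zero_right]; linarith
  simp only [ContinuousLinearMap.mul_apply', Set.indicator_of_mem hp.2, Set.indicator_of_mem hb, one_mul]
  exact gg_le hp.1 hp.2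

def Bdd (f : E2 → ℝ) : Prop := AEMeasurable f muD ∧ ∃ c, ∀ᵐ x ∂muD, ‖f x‖ ≤ c

lemma Bdd.int {f : E2 → ℝ} (hf : Bdd f) : Integrable f muD := by
  obtain ⟨h, c, hc⟩ := hf
  exact Integrable.of_bound h.aestronglyMeasurable c hc

lemma integ_green {f g : E2 → ℝ} (hf : Bdd f) (hg : Bdd g) :
    Integrable (fun p : E2 × E2 => greenG p.1 p.2 * f p.1 * g p.2) (muD.prod muD) := by
  have hG : Integrable (fun p : E2 × E2 => greenG p.1 p.2) (muD.prod muD) :=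
    integ_gg.congr (ae_green.mono fun p hp => hp.symm)
  obtain ⟨hfm, c, hc⟩ := hf
  obtain ⟨hgm, d, hd⟩ := hg
  refine (hG.mul_bdd (c := c) hfm.aestronglyMeasurable.comp_fst ?_).mul_bdd (c := d)
    hgm.aestronglyMeasurable.comp_snd ?_
  · exact Measure.quasiMeasurePreserving_fst.ae hc
  · exact Measure.quasiMeasurePreserving_snd.ae hd

def bil (f g : E2 → ℝ) : ℝ := ∫ p : E2 × E2, greenG p.1 p.2 * f p.1 * g p.2 ∂(muD.prod muD)

lemma bil_iter {f g : E2 → ℝ} (hf : Bdd f) (hg : Bdd g) :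
    bil f g = ∫ x, ∫ y, greenG x y * f x * g y ∂muD ∂muD :=
  integral_prod _ (integ_green hf hg)

lemma bil_symm (f g : E2 → ℝ) : bil f g = bil g f := by
  have e : ∀ f g : E2 → ℝ, bil f g =
      ∫ p : E2 × E2, gg p.1 p.2 * f p.1 * g p.2 ∂(muD.prod muD) := fun f g =>
    integral_congr_ae (ae_green.mono fun p hp => by simp only [hp])
  rw [e f g, e g f, ← integral_prod_swap]
  congr 1; ext p
  simp only [Prod.fst_swap, Prod.snd_swap]
  rw [gg_symm]; ring

lemma Bdd.add {f g : E2 → ℝ} (hf : Bdd f) (hg : Bdd g) : Bdd (fun x => f x + g x) := by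
  obtain ⟨hfm, c, hc⟩ := hf
  obtain ⟨hgm, d, hd⟩ := hg
  refine ⟨hfm.add hgm, c + d, ?_⟩
  filter_upwards [hc, hd] with x h1 h2
  exact (norm_add_le _ _).trans (add_le_add h1 h2)

lemma Bdd.smul {f : E2 → ℝ} (hf : Bdd f) (a : ℝ) : Bdd (fun x => a * f x) := by
  obtain ⟨hfm, c, hc⟩ := hf
  refine ⟨hfm.const_mul a, ‖a‖ * c, ?_⟩
  filter_upwards [hc] with x h1
  rw [norm_mul]; gcongr

lemma Bdd.ind {C : Set E2} (hC : MeasurableSet C) : Bdd (C.indicator (fun _ => (1:ℝ))) := by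
  refine ⟨(measurable_const.indicator hC).aemeasurable, 1, Eventually.of_forall fun x => ?_⟩
  by_cases h : x ∈ C <;> simp [h]

lemma bil_expand {w f : E2 → ℝ} (hw : Bdd w) (hf : Bdd f) (e : ℝ) :
    bil (fun x => w x + e * f x) (fun x => w x + e * f x) =
      bil w w + 2 * e * bil f w + e^2 * bil f f := by
  have h1 := integ_green hw hw
  have h2 := integ_green hf hw
  have h3 := integ_green hw hf
  have h4 := integ_green hf hf
  have : bil (fun x => w x + e * f x) (fun x => w x + e * f x) =
      bil w w + e * bil f w + e * bil w f + e^2 * bil f f := by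
    unfold bil
    have h12 : Integrable (fun p : E2 × E2 => greenG p.1 p.2 * w p.1 * w p.2 +
        e * (greenG p.1 p.2 * f p.1 * w p.2)) (muD.prod muD) := h1.add (h2.const_mul e)
    have h123 : Integrable (fun p : E2 × E2 => greenG p.1 p.2 * w p.1 * w p.2 +
        e * (greenG p.1 p.2 * f p.1 * w p.2) + e * (greenG p.1 p.2 * w p.1 * f p.2))
        (muD.prod muD) := h12.add (h3.const_mul e)
    rw [← integral_const_mul, ← integral_const_mul, ← integral_const_mul,
      ← integral_add h1 (h2.const_mul e), ← integral_add h12 (h3.const_mul e),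
      ← integral_add h123 (h4.const_mul _)]
    congr 1; ext p; ring
  rw [this, bil_symm w f]; ring

lemma Bdd.normsq {f : E2 → ℝ} (hf : Bdd f) : Integrable (fun x => ‖x‖^2 * f x) muD := by
  refine hf.int.bdd_mul (c := 1) (by fun_prop) ?_
  filter_upwards [ae_restrict_mem disk_meas] with x hx
  have := one_sub_pos hx
  rw [Real.norm_of_nonneg (by positivity)]; linarith

/-- Energy expansion along a perturbation supported where the stream function is constant. -/
lemma calE_expand {Ω μ e : ℝ} {w f : E2 → ℝ} (hw : Bdd w) (hf : Bdd f)
    (hpsi : ∀ᵐ x ∂muD, f x ≠ 0 → psiFun Ω w x = μ) (h0 : ∫ x, f x ∂muD = 0) :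
    calE Ω (fun x => w x + e * f x) = calE Ω w + e^2/2 * bil f f := by
  have hv := hw.add (hf.smul e)
  have hb : bil f w + Ω/2 * ∫ x, ‖x‖^2 * f x ∂muD = 0 := by
    have : bil f w = ∫ x, (μ * f x - Ω/2 * (‖x‖^2 * f x)) ∂muD := by
      rw [bil_iter hf hw]
      refine integral_congr_ae ?_
      filter_upwards [hpsi] with x hx
      have : ∫ y, greenG x y * f x * w y ∂muD = f x * ∫ y, greenG x y * w y ∂muD := by
        rw [← integral_const_mul]; congr 1; ext y; ring
      rw [this]
      by_cases h : f x = 0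
      · simp [h]
      · have := hx h
        unfold psiFun at this
        change (∫ y, greenG x y * w y ∂muD) + _ = _ at this
        rw [← this]; ring
    rw [this, integral_sub (hf.int.const_mul μ) (hf.normsq.const_mul _), integral_const_mul,
      integral_const_mul, h0]
    ring
  have hE : ∀ u : E2 → ℝ, Bdd u → calE Ω u = 1/2 * bil u u + Ω/2 * ∫ x, ‖x‖^2 * u x ∂muD := by
    intro u hu
    rw [bil_iter hu hu]; rfl
  rw [hE _ hv, hE _ hw, bil_expand hw hf]
  have : ∫ x, ‖x‖^2 * (w x + e * f x) ∂muD =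
      ∫ x, ‖x‖^2 * w x ∂muD + e * ∫ x, ‖x‖^2 * f x ∂muD := by
    rw [← integral_const_mul, ← integral_add hw.normsq (hf.normsq.const_mul e)]
    congr 1; ext x; ring
  rw [this]
  linear_combination e * hb

lemma gg_ge {x y : E2} {k r : ℝ} (hk : 0 < k) (hr : 0 < r) (hx : k ≤ 1 - ‖x‖^2) (hy : k ≤ 1 - ‖y‖^2)
    (hxy : x ≠ y) (hd : ‖x - y‖ ≤ 2 * r) : (1/(4*π)) * Real.log (1 + k^2/(2*r)^2) ≤ gg x y := by
  have hp : 0 < ‖x - y‖ := norm_pos_iff.2 (sub_ne_zero.2 hxy)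
  unfold gg
  have : k^2/(2*r)^2 ≤ (1-‖x‖^2)*(1-‖y‖^2)/‖x-y‖^2 := by
    apply div_le_div₀ _ _ (by positivity) (by gcongr)
    · exact mul_nonneg (by linarith) (by linarith)
    · nlinarith
  gcongr

lemma gg_far {x y : E2} {d : ℝ} (hd : 0 < d) (hx : x ∈ diskD) (hy : y ∈ diskD)
    (h : d ≤ ‖x - y‖) : gg x y ≤ (1/(4*π)) * Real.log (1 + 1/d^2) := by
  have h1 := one_sub_pos hx
  have h2 := one_sub_pos hy
  unfold gg
  have : (1-‖x‖^2)*(1-‖y‖^2)/‖x-y‖^2 ≤ 1/d^2 := by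
    apply div_le_div₀ (by norm_num) _ (by positivity) (by gcongr)
    nlinarith [h1.1, h1.2, h2.1, h2.2]
  have : 0 ≤ (1-‖x‖^2)*(1-‖y‖^2)/‖x-y‖^2 := by
    have := h1.1; have := h2.1; positivity
  gcongr

lemma ind_prod_int {C C' : Set E2} (hC : MeasurableSet C) (hC' : MeasurableSet C') :
    ∫ p : E2 × E2, C.indicator (fun _ => (1:ℝ)) p.1 * C'.indicator (fun _ => (1:ℝ)) p.2
      ∂(muD.prod muD) = muD.real C * muD.real C' := by
  rw [integral_prod_mul, integral_indicator_const _ hC, integral_indicator_const _ hC']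
  simp

lemma ind_prod_integ {C C' : Set E2} (hC : MeasurableSet C) (hC' : MeasurableSet C') :
    Integrable (fun p : E2 × E2 => C.indicator (fun _ => (1:ℝ)) p.1 *
      C'.indicator (fun _ => (1:ℝ)) p.2) (muD.prod muD) :=
  (Bdd.ind hC).int.mul_prod (Bdd.ind hC').int

set_option maxHeartbeats 1000000 in
lemma exists_pert {B : Set E2} (hBm : MeasurableSet B) (hBD : B ⊆ diskD) (hB : muD B ≠ 0) :
    ∃ f : E2 → ℝ, Bdd f ∧ (∀ x, f x ≠ 0 → x ∈ B) ∧ ∫ x, f x ∂muD = 0 ∧ 0 < bil f f ∧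
      ∃ M : ℝ, 0 < M ∧ ∀ x, |f x| ≤ M := by
  obtain ⟨x0, hx0, hp0⟩ := exists_mem_forall_mem_nhdsWithin_pos_measure hB
  have hB' : muD (B \ {x0}) ≠ 0 := by
    rw [measure_sdiff_null]
    · exact hB
    · unfold muD
      exact le_antisymm ((Measure.restrict_apply_le _ _).trans (by simp)) (zero_le)
  obtain ⟨x1, hx1, hp1⟩ := exists_mem_forall_mem_nhdsWithin_pos_measure hB'
  have hne : x0 ≠ x1 := fun h => hx1.2 h.symm
  set d := ‖x0 - x1‖ with hd
  have hd0 : 0 < d := norm_pos_iff.2 (sub_ne_zero.2 hne)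
  have hx0D := mem_disk.1 (hBD hx0)
  set ρ := (1 + ‖x0‖)/2 with hρ
  have hρ1 : ρ < 1 := by rw [hρ]; linarith
  have hρ0 : 0 ≤ ρ := by positivity
  set k := 1 - ρ^2 with hk
  have hk0 : 0 < k := by rw [hk]; nlinarith
  set S := 1 + 1/(d/2)^2 with hS
  obtain ⟨r, hr0, hrd, hrx, hrS⟩ : ∃ r : ℝ, 0 < r ∧ r < d/4 ∧ r < (1-‖x0‖)/2 ∧
      S^2 * (2*r)^2 < k^2 := by
    have a1 : ∀ᶠ r : ℝ in 𝓝[>] 0, 0 < r := eventually_mem_nhdsWithin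
    have a2 : ∀ᶠ r : ℝ in 𝓝[>] 0, r < d/4 :=
      (eventually_lt_nhds (by positivity)).filter_mono nhdsWithin_le_nhds
    have a3 : ∀ᶠ r : ℝ in 𝓝[>] 0, r < (1-‖x0‖)/2 :=
      (eventually_lt_nhds (by linarith)).filter_mono nhdsWithin_le_nhds
    have a4 : ∀ᶠ r : ℝ in 𝓝[>] 0, S^2*(2*r)^2 < k^2 := by
      have : ContinuousAt (fun r : ℝ => S^2*(2*r)^2) 0 := by fun_prop
      exact (this.eventually_lt continuousAt_const (by simp; positivity)).filter_mono nhdsWithin_le_nhds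
    exact (a1.and (a2.and (a3.and a4))).exists
  set C := B ∩ Metric.ball x0 r with hC
  set C' := B ∩ Metric.ball x1 (d/4) with hC'
  have hCm : MeasurableSet C := hBm.inter measurableSet_ball
  have hCm' : MeasurableSet C' := hBm.inter measurableSet_ball
  have ha : 0 < muD.real C := by
    refine ENNReal.toReal_pos (ne_of_gt (hp0 C ?_)) (measure_ne_top _ _)
    exact inter_mem_nhdsWithin _ (Metric.ball_mem_nhds _ hr0)
  have ha' : 0 < muD.real C' := by
    refine ENNReal.toReal_pos (ne_of_gt ((hp1 ((B \ {x0}) ∩ Metric.ball x1 (d/4)) ?_).trans_le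
      (measure_mono (inter_subset_inter_left _ sdiff_subset)))) (measure_ne_top _ _)
    exact inter_mem_nhdsWithin _ (Metric.ball_mem_nhds _ (by positivity))
  set a := muD.real C with haC
  set a' := muD.real C' with haC'
  have hfar : ∀ x ∈ C, ∀ y ∈ C', d/2 ≤ ‖x - y‖ := by
    intro x hx y hy
    have h1 := Metric.mem_ball.1 hx.2
    have h2 := Metric.mem_ball.1 hy.2
    have h3 : d = dist x0 x1 := by rw [dist_eq_norm]
    have h4 := dist_triangle4 x0 x y x1
    rw [dist_comm x0 x] at h4
    rw [← dist_eq_norm]; linarith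
  have hdisj : ∀ x ∈ C, x ∉ C' := by
    intro x hx hx'
    have := hfar x hx x hx'
    simp at this; linarith
  set I := C.indicator (fun _ => (1:ℝ)) with hI
  set I' := C'.indicator (fun _ => (1:ℝ)) with hI'
  set L := (1/(4*π)) * Real.log (1 + k^2/(2*r)^2) with hL
  set M := (1/(4*π)) * Real.log S with hM
  have hLM : 2 * M < L := by
    have hS1 : 0 < S := by positivity
    have : Real.log (S^2) < Real.log (1 + k^2/(2*r)^2) := by
      apply Real.log_lt_log (by positivity)
      have : S^2 < k^2/(2*r)^2 := by rw [lt_div_iff₀ (by positivity)]; exact hrS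
      linarith
    rw [Real.log_pow] at this
    push_cast at this
    rw [hM, hL]
    have hpi : 0 < 1/(4*π) := by positivity
    nlinarith
  have hf : Bdd (fun x => a' * I x + (-a) * I' x) :=
    ((Bdd.ind hCm).smul a').add ((Bdd.ind hCm').smul (-a))
  refine ⟨fun x => a' * I x + (-a) * I' x, hf, ?_, ?_, ?_, a + a', by positivity, ?_⟩
  · intro x hx
    by_contra h
    apply hx
    have h1 : x ∉ C := fun h' => h h'.1
    have h2 : x ∉ C' := fun h' => h h'.1
    simp [hI, hI', h1, h2]
  · rw [integral_add ((Bdd.ind hCm).smul a').int ((Bdd.ind hCm').smul (-a)).int,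
      integral_const_mul, integral_const_mul, integral_indicator_const _ hCm,
      integral_indicator_const _ hCm']
    simp only [smul_eq_mul, mul_one]
    rw [← haC, ← haC']; ring
  · have i1 := (ind_prod_integ hCm hCm).const_mul (L * a'^2)
    have i2 := (ind_prod_integ hCm hCm').const_mul (M * a * a')
    have i3 := (ind_prod_integ hCm' hCm).const_mul (M * a * a')
    have key : ∫ p : E2 × E2, (L * a'^2 * (I p.1 * I p.2) - M * a * a' * (I p.1 * I' p.2)
        - M * a * a' * (I' p.1 * I p.2)) ∂(muD.prod muD) ≤
        bil (fun x => a' * I x + (-a) * I' x) (fun x => a' * I x + (-a) * I' x) := by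
      refine integral_mono_ae ((i1.sub i2).sub i3) (integ_green hf hf) ?_
      have hdiag : ∀ᵐ p ∂(muD.prod muD), p.1 ≠ p.2 := by
        have hm : MeasurableSet {p : E2 × E2 | p.1 ≠ p.2} :=
          (measurableSet_eq_fun measurable_fst measurable_snd).compl
        rw [Measure.ae_prod_iff_ae_ae hm]
        refine Eventually.of_forall fun x => ?_
        have : ∀ᵐ y ∂muD, y ≠ x :=
          ae_restrict_of_ae (by simp [ae_iff, measure_singleton])
        exact this.mono fun y h => h.symm
      filter_upwards [ae_green, ae_prod_disk, hdiag] with p hg hpD hpne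
      rw [hg]
      have hg0 := gg_nonneg hpD.1 hpD.2
      have hkx : ∀ x ∈ C, k ≤ 1 - ‖x‖^2 := by
        intro x hx
        have h1 := Metric.mem_ball.1 hx.2
        rw [dist_eq_norm] at h1
        have h2 := norm_sub_norm_le x x0
        have h3 : ‖x‖ ≤ ρ := by rw [hρ]; linarith
        have := norm_nonneg x
        rw [hk]; nlinarith
      by_cases c1 : p.1 ∈ C
      · have c1' := hdisj _ c1
        by_cases c2 : p.2 ∈ C
        · have c2' := hdisj _ c2
          simp only [hI, hI', Set.indicator_of_mem c1, Set.indicator_of_notMem c1',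
            Set.indicator_of_mem c2, Set.indicator_of_notMem c2']
          have hle : ‖p.1 - p.2‖ ≤ 2 * r := by
            have h1 := Metric.mem_ball.1 c1.2
            have h2 := Metric.mem_ball.1 c2.2
            rw [← dist_eq_norm]
            have := dist_triangle_right p.1 p.2 x0
            linarith
          have := gg_ge hk0 hr0 (hkx _ c1) (hkx _ c2) hpne hle
          have h5 : 0 < a'^2 := by positivity
          nlinarith
        · by_cases c2' : p.2 ∈ C'
          · simp only [hI, hI', Set.indicator_of_mem c1, Set.indicator_of_notMem c1',
              Set.indicator_of_notMem c2, Set.indicator_of_mem c2']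
            have := gg_far (d := d/2) (by positivity) hpD.1 hpD.2 (hfar _ c1 _ c2')
            have h5 : 0 < a * a' := by positivity
            nlinarith
          · simp [hI, hI', c2, c2']
      · by_cases c1' : p.1 ∈ C'
        · by_cases c2 : p.2 ∈ C
          · have c2' := hdisj _ c2
            simp only [hI, hI', Set.indicator_of_notMem c1, Set.indicator_of_mem c1',
              Set.indicator_of_mem c2, Set.indicator_of_notMem c2']
            have hh := hfar _ c2 _ c1'
            rw [norm_sub_rev] at hh
            have := gg_far (d := d/2) (by positivity) hpD.1 hpD.2 hh
            have h5 : 0 < a * a' := by positivity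
            nlinarith
          · by_cases c2' : p.2 ∈ C'
            · simp only [hI, hI', Set.indicator_of_notMem c1, Set.indicator_of_mem c1',
                Set.indicator_of_notMem c2, Set.indicator_of_mem c2']
              have h5 : 0 < a * a := by positivity
              nlinarith
            · simp [hI, hI', c2, c2']
        · simp [hI, hI', c1, c1']
    refine lt_of_lt_of_le ?_ key
    have i12 : Integrable (fun p : E2 × E2 => L * a'^2 * (I p.1 * I p.2) -
        M * a * a' * (I p.1 * I' p.2)) (muD.prod muD) := i1.sub i2
    rw [integral_sub i12 i3, integral_sub i1 i2, integral_const_mul, integral_const_mul,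
      integral_const_mul, ind_prod_int hCm hCm, ind_prod_int hCm hCm', ind_prod_int hCm' hCm,
      ← haC, ← haC']
    have h6 : 0 < (a*a')^2 * (L - 2*M) := mul_pos (by positivity) (by linarith)
    refine h6.trans_eq ?_
    ring
  · intro x
    by_cases c1 : x ∈ C
    · simp only [hI, hI', Set.indicator_of_mem c1, Set.indicator_of_notMem (hdisj _ c1)]
      rw [abs_of_nonneg] <;> linarith
    · by_cases c2 : x ∈ C'
      · simp only [hI, hI', Set.indicator_of_notMem c1, Set.indicator_of_mem c2]
        rw [abs_of_nonpos] <;> linarith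
      · simp only [hI, hI', Set.indicator_of_notMem c1, Set.indicator_of_notMem c2]
        simp; linarith

theorem stmt8 (Ω lam : ℝ) (hΩ : 0 < Ω) (hlam : 1/π < lam) (hne : lam ≠ 2*Ω)
    (wlam : E2 → ℝ) (hmem : wlam ∈ Kset lam)
    (hmax : ∀ v ∈ Kset lam, calE Ω v ≤ calE Ω wlam)
    (mulam : ℝ)
    (hstruct : wlam =ᵐ[muD] fun x =>
      lam * Set.indicator {x ∈ diskD | mulam < psiFun Ω wlam x} (fun _ => (1:ℝ)) x +
      2*Ω * Set.indicator {x ∈ diskD | psiFun Ω wlam x = mulam} (fun _ => (1:ℝ)) x) :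
    volume {x ∈ diskD | psiFun Ω wlam x = mulam} = 0 ∧
    wlam =ᵐ[muD] fun x =>
      lam * Set.indicator {x ∈ diskD | mulam < psiFun Ω wlam x} (fun _ => (1:ℝ)) x := by
  have hpi : 0 < 1/π := by positivity
  have hlam0 : 0 < lam := hpi.trans hlam
  have hBm : muD {x ∈ diskD | psiFun Ω wlam x = mulam} = 0 →
      volume {x ∈ diskD | psiFun Ω wlam x = mulam} = 0 := by
    intro h
    have hs : {x ∈ diskD | psiFun Ω wlam x = mulam} ⊆ diskD := fun x hx => hx.1
    unfold muD at h
    rwa [Measure.restrict_apply' disk_meas, inter_eq_left.2 hs] at h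
  have main : muD {x ∈ diskD | psiFun Ω wlam x = mulam} = 0 := by
    have hval : ∀ᵐ x ∂muD, x ∈ diskD ∧ (psiFun Ω wlam x = mulam → wlam x = 2*Ω) ∧
        (wlam x = 2*Ω → psiFun Ω wlam x = mulam) := by
      filter_upwards [hstruct, ae_restrict_mem disk_meas] with x hx hxD
      refine ⟨hxD, fun h => ?_, fun h => ?_⟩
      · rw [hx]; simp [h, hxD]
      · by_contra hn
        rw [hx] at h
        by_cases h2 : mulam < psiFun Ω wlam x
        · simp [hn, h2, hxD] at h; exact hne h
        · simp [hn, h2] at h; linarith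
    obtain ⟨hwm, hwb, hw1⟩ := hmem
    rcases lt_or_gt_of_ne hne with hlt | hgt
    · have : ∀ᵐ x ∂muD, ¬ (x ∈ diskD ∧ psiFun Ω wlam x = mulam) := by
        filter_upwards [hval, hwb] with x hx hb h
        have := hx.2.1 h.2
        linarith [hb.2]
      simpa [ae_iff] using this
    · have hwB : Bdd wlam := by
        refine ⟨hwm, lam, ?_⟩
        filter_upwards [hwb] with x hx
        rw [Real.norm_of_nonneg hx.1]; exact hx.2
      set B : Set E2 := diskD ∩ (hwm.mk wlam) ⁻¹' {2*Ω} with hBdef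
      have hBmeas : MeasurableSet B :=
        disk_meas.inter (hwm.measurable_mk (measurableSet_singleton _))
      by_cases hB0 : muD B = 0
      · have hB0' : ∀ᵐ x ∂muD, x ∉ B := by simpa [ae_iff] using hB0
        have : ∀ᵐ x ∂muD, ¬ (x ∈ diskD ∧ psiFun Ω wlam x = mulam) := by
          filter_upwards [hval, hB0', hwm.ae_eq_mk] with x hx hb he h
          exact hb ⟨h.1, by rw [mem_preimage, ← he]; exact hx.2.1 h.2⟩
        simpa [ae_iff] using this
      · exfalso
        obtain ⟨f, hf, hfB, hf0, hfpos, M, hM0, hM⟩ := exists_pert hBmeas inter_subset_left hB0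
        set m := min (lam - 2*Ω) (2*Ω) with hm
        have hm0 : 0 < m := lt_min (by linarith) (by linarith)
        have hm1 : m ≤ lam - 2*Ω := min_le_left _ _
        have hm2 : m ≤ 2*Ω := min_le_right _ _
        have hfw : ∀ᵐ x ∂muD, f x ≠ 0 → wlam x = 2*Ω := by
          filter_upwards [hwm.ae_eq_mk] with x he h
          rw [he]; exact (hfB x h).2
        have he0 : 0 < m/M := by positivity
        have hE := calE_expand (Ω := Ω) (μ := mulam) (e := m/M) hwB hf (by
          filter_upwards [hfw, hval] with x h1 h2 h
          exact h2.2.2 (h1 h)) hf0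
        have hle := hmax (fun x => wlam x + m/M * f x) ⟨(hwB.add (hf.smul _)).1, ?_, ?_⟩
        · rw [hE] at hle
          have : 0 < (m/M)^2/2 * bil f f := by positivity
          linarith
        · filter_upwards [hfw, hwb] with x h1 h2
          by_cases h : f x = 0
          · simpa [h] using h2
          · have hb : |m/M * f x| ≤ m := by
              rw [abs_mul, abs_of_pos he0]
              calc m/M * |f x| ≤ m/M * M := by gcongr; exact hM x
                _ = m := by field_simp
            rw [h1 h]
            have := abs_le.1 hb
            constructor <;> linarith
        · rw [integral_add hwB.int (hf.smul _).int, integral_const_mul, hf0, hw1]; simp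
  refine ⟨hBm main, ?_⟩
  have hn : ∀ᵐ x ∂muD, x ∉ {x ∈ diskD | psiFun Ω wlam x = mulam} := by
    rw [ae_iff]; simpa using main
  filter_upwards [hstruct, hn] with x hx hnx
  have hnx' : x ∉ {x ∈ diskD | psiFun Ω wlam x = mulam} := hnx
  rw [hx, Set.indicator_of_notMem hnx']; simp
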